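/- For every architecture A, finite alphabet Σ, and every sentence Φ of PDL(A,Σ) (the fragment of ICPDL without converse, intersection, and loop), there exists a CPDS S over (A,Σ) such that L(S) = L_cbm(Φ), the set of CBMs over (A,Σ) satisfying Φ. -/

import Mathlib

/-! ### Architectures and concurrent behaviors with matching (CBMs) -/

/-- The three kinds of data structures. -/
inductive DSKind : Type
  | stack
  | queue
  | bag
deriving DecidableEq

/-- An architecture: a finite set of processes, a finite set of data structures
(each a stack, queue, or bag), with writer and reader processes; stacks are
written and read by the same process. -/
structure Architecture where
  Procs : Type
  DS : Type
  procsFintype : Fintype Procs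
  dsFintype : Fintype DS
  procsDecEq : DecidableEq Procs
  dsDecEq : DecidableEq DS
  kind : DS → DSKind
  Writer : DS → Procs
  Reader : DS → Procs
  stack_wr : ∀ d, kind d = DSKind.stack → Writer d = Reader d

attribute [instance] Architecture.procsFintype Architecture.dsFintype
  Architecture.procsDecEq Architecture.dsDecEq

/-- Potential events: a process together with a (1-based) position. -/
abbrev Architecture.Event (A : Architecture) : Type := A.Procs × ℕ

/-- The data of a CBM: one word per process and one matching relation per
data structure (on potential events). -/
structure PreCBM (A : Architecture) (Alph : Type) where
  word : A.Procs → List Alph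
  mrel : A.DS → A.Event → A.Event → Prop

namespace PreCBM

variable {A : Architecture} {Alph : Type}

/-- `(p,i)` is an event iff `1 ≤ i ≤ |w_p|`. -/
def isEvent (M : PreCBM A Alph) (e : A.Event) : Prop :=
  1 ≤ e.2 ∧ e.2 ≤ (M.word e.1).length

/-- The set of events of `M`. -/
def events (M : PreCBM A Alph) : Set A.Event := {e | M.isEvent e}

/-- The label of event `(p,i)` is the `i`-th letter of `w_p`. -/
def label (M : PreCBM A Alph) (e : A.Event) : Option Alph :=
  (M.word e.1)[e.2 - 1]?

/-- Process-successor relation `(p,i) → (p,i+1)`. -/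
def procSucc (M : PreCBM A Alph) (e f : A.Event) : Prop :=
  M.isEvent e ∧ M.isEvent f ∧ f.1 = e.1 ∧ f.2 = e.2 + 1

/-- `e ▷ f` for some data structure. -/
def mat (M : PreCBM A Alph) (e f : A.Event) : Prop := ∃ d, M.mrel d e f

def step (M : PreCBM A Alph) (e f : A.Event) : Prop := M.procSucc e f ∨ M.mat e f

/-- The causal order `< = (→ ∪ ▷)⁺`. -/
def lt (M : PreCBM A Alph) : A.Event → A.Event → Prop := Relation.TransGen M.step

/-- An event is internal if it is not the endpoint of any matching edge. -/
def isInternal (M : PreCBM A Alph) (e : A.Event) : Prop :=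
  ¬ ∃ d f, M.mrel d e f ∨ M.mrel d f e

/-- The CBM axioms. -/
structure IsCBM (M : PreCBM A Alph) : Prop where
  mrel_valid : ∀ d e f, M.mrel d e f →
    M.isEvent e ∧ M.isEvent f ∧ e.1 = A.Writer d ∧ f.1 = A.Reader d
  disjoint : ∀ d d' e f e' f', M.mrel d e f → M.mrel d' e' f' →
    ¬ (d = d' ∧ e = e' ∧ f = f') → e ≠ e' ∧ e ≠ f' ∧ f ≠ e' ∧ f ≠ f'
  irrefl : ∀ e, ¬ M.lt e e
  lifo : ∀ d, A.kind d = DSKind.stack → ∀ e₁ f₁ e₂ f₂,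
    M.mrel d e₁ f₁ → M.mrel d e₂ f₂ → M.lt e₁ e₂ → M.lt e₂ f₁ → M.lt f₂ f₁
  fifo : ∀ d, A.kind d = DSKind.queue → ∀ e₁ f₁ e₂ f₂,
    M.mrel d e₁ f₁ → M.mrel d e₂ f₂ → M.lt e₁ e₂ → M.lt f₁ f₂

end PreCBM

/-- Concurrent behaviors with matching over `(A, Alph)`. -/
def CBM (A : Architecture) (Alph : Type) : Type := {M : PreCBM A Alph // M.IsCBM}
/-! ### Systems of concurrent processes with data structures (CPDS) -/

/-- A CPDS over an architecture `A` and alphabet `Alph`. -/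
structure CPDS (A : Architecture) (Alph : Type) where
  Locs : Type
  Val : Type
  locsFintype : Fintype Locs
  valFintype : Fintype Val
  locsNonempty : Nonempty Locs
  valNonempty : Nonempty Val
  internal : A.Procs → Locs → Alph → Locs → Prop
  write : A.Procs → Locs → Alph → A.DS → Val → Locs → Prop
  read : A.Procs → Locs → Alph → A.DS → Val → Locs → Prop
  write_writer : ∀ p ℓ a d v ℓ', write p ℓ a d v ℓ' → A.Writer d = p
  read_reader : ∀ p ℓ a d v ℓ', read p ℓ a d v ℓ' → A.Reader d = p
  init : Locs
  finals : Set (A.Procs → Locs)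

namespace CPDS

variable {A : Architecture} {Alph : Type}

/-- `ρ⁻(e)`: location before event `e` (`init` if `e` is minimal on its process). -/
def prevLoc (S : CPDS A Alph) (ρ : A.Event → S.Locs) (e : A.Event) : S.Locs :=
  if e.2 ≤ 1 then S.init else ρ (e.1, e.2 - 1)

/-- `ρ` is a run of `S` on `M` (graph semantics). -/
def IsRun (S : CPDS A Alph) (M : PreCBM A Alph) (ρ : A.Event → S.Locs) : Prop :=
  (∀ e, M.isEvent e → M.isInternal e →
    ∃ a, M.label e = some a ∧ S.internal e.1 (S.prevLoc ρ e) a (ρ e)) ∧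
  (∀ d e f, M.mrel d e f → ∃ v a b,
    M.label e = some a ∧ M.label f = some b ∧
    S.write e.1 (S.prevLoc ρ e) a d v (ρ e) ∧
    S.read f.1 (S.prevLoc ρ f) b d v (ρ f))

/-- Location of the last event of process `p` (`init` if it has no event). -/
def lastLoc (S : CPDS A Alph) (M : PreCBM A Alph) (ρ : A.Event → S.Locs)
    (p : A.Procs) : S.Locs :=
  if (M.word p).length = 0 then S.init else ρ (p, (M.word p).length)

/-- `S` accepts `M`: some run reaching a global final location tuple. -/
def AcceptsPre (S : CPDS A Alph) (M : PreCBM A Alph) : Prop :=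
  ∃ ρ : A.Event → S.Locs, S.IsRun M ρ ∧ (fun p => S.lastLoc M ρ p) ∈ S.finals

/-- The graph-semantics language `L(S) ⊆ CBM(A,Alph)`. -/
def lang (S : CPDS A Alph) : Set (CBM A Alph) := {M | S.AcceptsPre M.1}

end CPDS
/-! ### (IC)PDL over CBMs -/

mutual
  /-- State formulas of ICPDL over CBMs. -/
  inductive PdlS (A : Architecture) (Alph : Type) : Type
    | proc (p : A.Procs)
    | letter (a : Alph)
    | or (σ₁ σ₂ : PdlS A Alph)
    | not (σ : PdlS A Alph)
    | diam (π : PdlP A Alph) (σ : PdlS A Alph)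
    | loop (π : PdlP A Alph)
  /-- Path formulas of ICPDL over CBMs. -/
  inductive PdlP (A : Architecture) (Alph : Type) : Type
    | succ
    | mat (d : A.DS)
    | test (σ : PdlS A Alph)
    | plus (π₁ π₂ : PdlP A Alph)
    | comp (π₁ π₂ : PdlP A Alph)
    | star (π : PdlP A Alph)
    | conv (π : PdlP A Alph)
    | inter (π₁ π₂ : PdlP A Alph)
end

/-- Sentences of ICPDL. -/
inductive PdlSentence (A : Architecture) (Alph : Type) : Type
  | ex (σ : PdlS A Alph)
  | or (Φ₁ Φ₂ : PdlSentence A Alph)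
  | not (Φ : PdlSentence A Alph)

section PdlSem

variable {A : Architecture} {Alph : Type}

mutual
  /-- Semantics of state formulas over a CBM. -/
  def pdlSSem (M : PreCBM A Alph) : PdlS A Alph → A.Event → Prop
    | .proc p => fun e => M.isEvent e ∧ e.1 = p
    | .letter a => fun e => M.isEvent e ∧ M.label e = some a
    | .or σ₁ σ₂ => fun e => pdlSSem M σ₁ e ∨ pdlSSem M σ₂ e
    | .not σ => fun e => M.isEvent e ∧ ¬ pdlSSem M σ e
    | .diam π σ => fun e => ∃ f, pdlPSem M π e f ∧ pdlSSem M σ f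
    | .loop π => fun e => pdlPSem M π e e
  /-- Semantics of path formulas over a CBM. -/
  def pdlPSem (M : PreCBM A Alph) : PdlP A Alph → A.Event → A.Event → Prop
    | .succ => fun e f => M.procSucc e f
    | .mat d => fun e f => M.mrel d e f
    | .test σ => fun e f => e = f ∧ pdlSSem M σ e
    | .plus π₁ π₂ => fun e f => pdlPSem M π₁ e f ∨ pdlPSem M π₂ e f
    | .comp π₁ π₂ => fun e f => ∃ g, pdlPSem M π₁ e g ∧ pdlPSem M π₂ g f
    | .star π => fun e f =>
        (M.isEvent e ∧ e = f) ∨ Relation.TransGen (fun u v => pdlPSem M π u v) e f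
    | .conv π => fun e f => pdlPSem M π f e
    | .inter π₁ π₂ => fun e f => pdlPSem M π₁ e f ∧ pdlPSem M π₂ e f
end

/-- Semantics of sentences over a CBM. -/
def pdlSentSem (M : PreCBM A Alph) : PdlSentence A Alph → Prop
  | .ex σ => ∃ e, M.isEvent e ∧ pdlSSem M σ e
  | .or Φ₁ Φ₂ => pdlSentSem M Φ₁ ∨ pdlSentSem M Φ₂
  | .not Φ => ¬ pdlSentSem M Φ

end PdlSem

/-- `L_cbm(Φ)`: the CBMs satisfying `Φ`. -/
def pdlLang (A : Architecture) (Alph : Type) (Φ : PdlSentence A Alph) :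
    Set (CBM A Alph) := {M | pdlSentSem M.1 Φ}

section PdlFrag

variable {A : Architecture} {Alph : Type}

mutual
  /-- No intersection of path formulas (LCPDL and below). -/
  def PdlS.NoInter : PdlS A Alph → Prop
    | .proc _ => True
    | .letter _ => True
    | .or σ₁ σ₂ => σ₁.NoInter ∧ σ₂.NoInter
    | .not σ => σ.NoInter
    | .diam π σ => π.NoInter ∧ σ.NoInter
    | .loop π => π.NoInter
  def PdlP.NoInter : PdlP A Alph → Prop
    | .succ => True
    | .mat _ => True
    | .test σ => σ.NoInter
    | .plus π₁ π₂ => π₁.NoInter ∧ π₂.NoInter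
    | .comp π₁ π₂ => π₁.NoInter ∧ π₂.NoInter
    | .star π => π.NoInter
    | .conv π => π.NoInter
    | .inter _ _ => False
end

mutual
  /-- No converse and no loop (IPDL and below). -/
  def PdlS.NoConvLoop : PdlS A Alph → Prop
    | .proc _ => True
    | .letter _ => True
    | .or σ₁ σ₂ => σ₁.NoConvLoop ∧ σ₂.NoConvLoop
    | .not σ => σ.NoConvLoop
    | .diam π σ => π.NoConvLoop ∧ σ.NoConvLoop
    | .loop _ => False
  def PdlP.NoConvLoop : PdlP A Alph → Prop
    | .succ => True
    | .mat _ => True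
    | .test σ => σ.NoConvLoop
    | .plus π₁ π₂ => π₁.NoConvLoop ∧ π₂.NoConvLoop
    | .comp π₁ π₂ => π₁.NoConvLoop ∧ π₂.NoConvLoop
    | .star π => π.NoConvLoop
    | .conv _ => False
    | .inter π₁ π₂ => π₁.NoConvLoop ∧ π₂.NoConvLoop
end

def PdlSentence.NoInter : PdlSentence A Alph → Prop
  | .ex σ => σ.NoInter
  | .or Φ₁ Φ₂ => Φ₁.NoInter ∧ Φ₂.NoInter
  | .not Φ => Φ.NoInter

def PdlSentence.NoConvLoop : PdlSentence A Alph → Prop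
  | .ex σ => σ.NoConvLoop
  | .or Φ₁ Φ₂ => Φ₁.NoConvLoop ∧ Φ₂.NoConvLoop
  | .not Φ => Φ.NoConvLoop

end PdlFrag

/-!
Without converse, whether an event satisfies `⟨π⟩σ` depends only on its causal future. Hence the
truth values of all subformulas are computed by a finite automaton that is deterministic *against*
the causal order. Reading a set `X` of marked events as an input, the operators taking `X` to the
events from which `π` leads to `X` compose by cascading such automata. For `π*` the automaton of `π`
needs to know at `e` whether `π*` leads from `e` to `X`; this is the case iff `e ∈ X` or the
automaton of `π` says yes at `e` when `e` itself is unmarked in its input, because an iteration of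
`π` that stays at `e` is superfluous.

The causal order is well founded, so the automaton has exactly one run, and a CPDS may guess it:
each location guesses the state of the next event on the process, and each write guesses the state
at the matching read and sends it along. Recording the states seen so far decides every Boolean
combination of sentences `Eσ`, negation included since the run is unique.
-/

namespace PreCBM

variable {A : Architecture} {Alph : Type} {β γ : Type*} {M : PreCBM A Alph}

/-- The edges of `M`, in one indexed family: `none` stands for `→` and `some d` for `▷^d`. -/
def edge (M : PreCBM A Alph) : Option A.DS → A.Event → A.Event → Prop
  | none => M.procSucc
  | some d => M.mrel d

/-- The values of `q` at the targets of the `c`-edges leaving `e`. -/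
def targets (M : PreCBM A Alph) (q : A.Event → β) (e : A.Event) (c : Option A.DS) : Set β :=
  q '' {f | M.edge c e f}

theorem image_targets (g : β → γ) (q : A.Event → β) (e : A.Event) (c : Option A.DS) :
    g '' M.targets q e c = M.targets (fun f => g (q f)) e c :=
  Set.image_image g q _

theorem elim_targets (q : A.Event → β) (e : A.Event) :
    (fun c : Option A.DS => c.elim (M.targets q e none) fun d => M.targets q e (some d)) =
      M.targets q e := by
  funext c
  cases c <;> rfl

theorem step_of_edge {c : Option A.DS} {e f : A.Event} (h : M.edge c e f) : M.step e f := by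
  cases c with
  | none => exact .inl h
  | some d => exact .inr ⟨d, h⟩

theorem IsCBM.isEvent_of_edge (hM : M.IsCBM) {c : Option A.DS} {e f : A.Event}
    (h : M.edge c e f) : M.isEvent f := by
  cases c with
  | none => exact h.2.1
  | some d => exact (hM.mrel_valid d e f h).2.1

theorem exists_label_eq_some {e : A.Event} (he : M.isEvent e) : ∃ a, M.label e = some a := by
  obtain ⟨hpos, hle⟩ := he
  exact ⟨_, List.getElem?_eq_getElem (by omega : e.2 - 1 < (M.word e.1).length)⟩

theorem finite_events (M : PreCBM A Alph) : M.events.Finite := by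
  have hfin := Set.finite_iUnion fun p =>
    (Set.finite_Icc 1 (M.word p).length).image (Prod.mk p)
  refine hfin.subset ?_
  rintro ⟨p, i⟩ he
  exact Set.mem_iUnion.2 ⟨p, i, he, rfl⟩

theorem IsCBM.wellFoundedOn_flip_lt (hM : M.IsCBM) : M.events.WellFoundedOn (flip M.lt) := by
  have : IsStrictOrder A.Event (flip M.lt) :=
    { irrefl := hM.irrefl
      trans := fun _ _ _ hfe hgf => hgf.trans hfe }
  exact M.finite_events.wellFoundedOn

theorem iUnion_image_Icc_eq_image_events (q : A.Event → β) :
    ⋃ p, (fun j => q (p, j)) '' Set.Icc 1 (M.word p).length = q '' M.events := by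
  ext s
  simp only [Set.mem_iUnion, Set.mem_image]
  exact ⟨fun ⟨p, j, hj, h⟩ => ⟨(p, j), hj, h⟩, fun ⟨e, he, h⟩ => ⟨e.1, e.2, he, h⟩⟩

theorem targets_none_of_isEvent_succ (q : A.Event → β) {e : A.Event} (he : M.isEvent e)
    (hsucc : M.isEvent (e.1, e.2 + 1)) : M.targets q e none = {q (e.1, e.2 + 1)} := by
  have : {f | M.edge none e f} = {(e.1, e.2 + 1)} := by
    ext f
    exact ⟨fun h => Prod.ext h.2.2.1 h.2.2.2, fun h => h ▸ ⟨he, hsucc, rfl, rfl⟩⟩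
  rw [targets, this, Set.image_singleton]

theorem targets_none_of_not_isEvent_succ (q : A.Event → β) {e : A.Event}
    (hsucc : ¬ M.isEvent (e.1, e.2 + 1)) : M.targets q e none = ∅ := by
  refine Set.image_eq_empty.2 (Set.eq_empty_of_forall_notMem fun f hf => hsucc ?_)
  obtain ⟨-, hf, hproc, hpos⟩ := hf
  rwa [← hproc, ← hpos]

theorem targets_some_of_isInternal (q : A.Event → β) {e : A.Event} (he : M.isInternal e) :
    (fun d => M.targets q e (some d)) = fun _ => ∅ :=
  funext fun d => Set.image_eq_empty.2 <|
    Set.eq_empty_of_forall_notMem fun f h => he ⟨d, f, .inl h⟩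

theorem IsCBM.targets_some_of_mrel_left (hM : M.IsCBM) (q : A.Event → β) {d : A.DS}
    {e f : A.Event} (h : M.mrel d e f) :
    (fun d' => M.targets q e (some d')) = Function.update (fun _ => ∅) d {q f} := by
  have unique : ∀ {d' g}, M.mrel d' e g → d' = d ∧ g = f := fun {d' g} h' => by
    by_contra hne
    exact (hM.disjoint d' d e g e f h' h fun ⟨hd, _, hg⟩ => hne ⟨hd, hg⟩).1 rfl
  funext d'
  rcases eq_or_ne d' d with rfl | hd
  · have : {g | M.mrel d' e g} = {f} := by
      ext g
      exact ⟨fun h' => (unique h').2, fun h' => h' ▸ h⟩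
    rw [Function.update_self, ← Set.image_singleton, ← this]
    rfl
  · rw [Function.update_of_ne hd]
    exact Set.image_eq_empty.2 (Set.eq_empty_of_forall_notMem fun g h' => hd (unique h').1)

theorem IsCBM.targets_some_of_mrel_right (hM : M.IsCBM) (q : A.Event → β) {d : A.DS}
    {e f : A.Event} (h : M.mrel d e f) :
    (fun d' => M.targets q f (some d')) = fun _ => ∅ := by
  refine funext fun d' => Set.image_eq_empty.2 (Set.eq_empty_of_forall_notMem fun g h' => ?_)
  by_cases heq : d = d' ∧ e = f ∧ f = g
  · obtain ⟨-, rfl, -⟩ := heq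
    exact hM.irrefl e (.single (.inr ⟨d, h⟩))
  · exact (hM.disjoint d d' e f f g h h' heq).2.2.1 rfl

end PreCBM

/-! ### Automata reading a CBM against the causal order -/

/-- A finite deterministic automaton reading a CBM against the causal order: the state at an
event is a function of its process, its label, a Boolean input and, for every kind `c` of edge,
the set of states at the targets of its outgoing `c`-edges. The input is what makes these automata
composable, and the label is optional only because `PreCBM.label` is. -/
structure LookaheadAutomaton (A : Architecture) (Alph : Type) where
  State : Type
  [finite : Finite State]
  δ : A.Procs → Option Alph → Prop → (Option A.DS → Set State) → State

namespace LookaheadAutomaton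

variable {A : Architecture} {Alph : Type} {M : PreCBM A Alph}

attribute [instance] LookaheadAutomaton.finite

/-- `q` is a run of `T` on `M` with input `X`. -/
def Labels (T : LookaheadAutomaton A Alph) (M : PreCBM A Alph) (X : A.Event → Prop)
    (q : A.Event → T.State) : Prop :=
  ∀ e, M.isEvent e → q e = T.δ e.1 (M.label e) (X e) (M.targets q e)

theorem Labels.eq_of_input_eq {T : LookaheadAutomaton A Alph} (hM : M.IsCBM)
    {X X' : A.Event → Prop} {q q' : A.Event → T.State} (hq : T.Labels M X q)
    (hq' : T.Labels M X' q') {e : A.Event} (he : M.isEvent e)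
    (hX : ∀ f, Relation.ReflTransGen M.step e f → X f = X' f) : q e = q' e := by
  revert hX
  refine hM.wellFoundedOn_flip_lt.induction (P := fun e =>
    (∀ f, Relation.ReflTransGen M.step e f → X f = X' f) → q e = q' e) he ?_
  intro e he ih hX
  have htargets : M.targets q e = M.targets q' e := by
    refine funext fun c => Set.image_congr fun f hf => ?_
    have hstep := PreCBM.step_of_edge hf
    exact ih f (hM.isEvent_of_edge hf) (.single hstep) fun g hg => hX g (.head hstep hg)
  rw [hq e he, hq' e he, hX e .refl, htargets]

theorem Labels.eq_δ_of_input_ne {T : LookaheadAutomaton A Alph} (hM : M.IsCBM)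
    {X : A.Event → Prop} {q q' : A.Event → T.State} {e : A.Event} (hq : T.Labels M X q)
    (hq' : T.Labels M (fun f => f ≠ e ∧ X f) q') (he : M.isEvent e) :
    q' e = T.δ e.1 (M.label e) False (M.targets q e) := by
  have htargets : M.targets q' e = M.targets q e := by
    refine funext fun c => Set.image_congr fun f hf => ?_
    refine hq'.eq_of_input_eq hM hq (hM.isEvent_of_edge hf) fun g hg => ?_
    have hge : g ≠ e := by
      rintro rfl
      exact hM.irrefl g (.head' (PreCBM.step_of_edge hf) hg)
    simp only [hge, ne_eq, not_false_eq_true, true_and]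
  rw [hq' e he, htargets]
  simp only [ne_eq, not_true_eq_false, false_and]

/-- The automaton running `T` and `U` side by side on the same input. -/
abbrev prod (T U : LookaheadAutomaton A Alph) : LookaheadAutomaton A Alph where
  State := T.State × U.State
  δ p a x S := (T.δ p a x fun c => Prod.fst '' S c, U.δ p a x fun c => Prod.snd '' S c)

theorem Labels.prod {T U : LookaheadAutomaton A Alph} {X : A.Event → Prop}
    {q : A.Event → T.State} {r : A.Event → U.State} (hq : T.Labels M X q)
    (hr : U.Labels M X r) : (T.prod U).Labels M X fun e => (q e, r e) := by
  intro e he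
  simp only [LookaheadAutomaton.prod, PreCBM.image_targets]
  exact Prod.ext (hq e he) (hr e he)

/-- The automaton feeding the output of `U` to `T` as input. -/
abbrev cascade (T U : LookaheadAutomaton A Alph) (out : U.State → Prop) :
    LookaheadAutomaton A Alph where
  State := T.State × U.State
  δ p a x S :=
    let u := U.δ p a x fun c => Prod.snd '' S c
    (T.δ p a (out u) fun c => Prod.fst '' S c, u)

theorem Labels.cascade {T U : LookaheadAutomaton A Alph} {out : U.State → Prop}
    {X Y : A.Event → Prop} {q : A.Event → T.State} {r : A.Event → U.State}
    (hq : T.Labels M Y q) (hr : U.Labels M X r) (hout : ∀ e, M.isEvent e → (out (r e) ↔ Y e)) :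
    (T.cascade U out).Labels M X fun e => (q e, r e) := by
  intro e he
  simp only [LookaheadAutomaton.cascade, PreCBM.image_targets]
  rw [← hr e he, propext (hout e he), ← hq e he]

/-- The automaton for the iteration of a path whose single traversal is tracked by `T`. The first
component of its state says whether an iterated path leads from the event to a marked one, and is
fed to `T` as input. It is computed by probing `T` with input `False` at the event, because
traversals returning to the same event may be left out. -/
abbrev star (T : LookaheadAutomaton A Alph) (out : T.State → Prop) : LookaheadAutomaton A Alph where
  State := Prop × T.State
  δ p a x S :=
    let S' := fun c => Prod.snd '' S c
    let y := x ∨ out (T.δ p a False S')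
    (y, T.δ p a y S')

theorem Labels.star {T : LookaheadAutomaton A Alph} {out : T.State → Prop}
    {X Y : A.Event → Prop} {q : A.Event → T.State} (hq : T.Labels M Y q)
    (hY : ∀ e, M.isEvent e → (Y e ↔ X e ∨ out (T.δ e.1 (M.label e) False (M.targets q e)))) :
    (T.star out).Labels M X fun e => (Y e, q e) := by
  intro e he
  simp only [LookaheadAutomaton.star, PreCBM.image_targets]
  rw [← propext (hY e he), ← hq e he]

end LookaheadAutomaton

theorem exists_reflTransGen_and_iff {α : Type*} (R : α → α → Prop) (P : α → Prop) (a : α) :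
    (∃ c, Relation.ReflTransGen R a c ∧ P c) ↔
      P a ∨ ∃ b, R a b ∧ b ≠ a ∧ ∃ c, Relation.ReflTransGen R b c ∧ P c := by
  constructor
  · rintro ⟨c, hac, hc⟩
    induction hac using Relation.ReflTransGen.head_induction_on with
    | refl => exact .inl hc
    | @head a b hab hbc ih =>
      rcases eq_or_ne b a with rfl | hne
      · exact ih
      · exact .inr ⟨b, hab, hne, c, hbc, hc⟩
  · rintro (ha | ⟨b, hab, -, c, hbc, hc⟩)
    · exact ⟨a, .refl, ha⟩
    · exact ⟨c, .head hab hbc, hc⟩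

/-! ### Recognizability of PDL -/

/-- An operator `F` on event predicates is recognizable if a single automaton computes `F M X` on
every CBM `M` from the input `X`. -/
def Recognizable {A : Architecture} {Alph : Type}
    (F : PreCBM A Alph → (A.Event → Prop) → A.Event → Prop) : Prop :=
  ∃ (T : LookaheadAutomaton A Alph) (out : T.State → Prop), ∀ M : PreCBM A Alph, M.IsCBM → ∀ X,
    ∃ q, T.Labels M X q ∧ ∀ e, M.isEvent e → (out (q e) ↔ F M X e)

namespace Recognizable

variable {A : Architecture} {Alph : Type}
  {F F' : PreCBM A Alph → (A.Event → Prop) → A.Event → Prop}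

theorem congr (hF : Recognizable F)
    (h : ∀ (M : PreCBM A Alph) X e, M.isEvent e → (F M X e ↔ F' M X e)) : Recognizable F' := by
  obtain ⟨T, out, hT⟩ := hF
  refine ⟨T, out, fun M hM X => ?_⟩
  obtain ⟨q, hq, hout⟩ := hT M hM X
  exact ⟨q, hq, fun e he => (hout e he).trans (h M X e he)⟩

theorem of_local (g : A.Procs → Option Alph → Prop → Prop) :
    Recognizable fun (M : PreCBM A Alph) X e => g e.1 (M.label e) (X e) :=
  ⟨{ State := Prop, δ := fun p a x _ => g p a x }, id, fun _ _ _ =>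
    ⟨_, fun _ _ => rfl, fun _ _ => .rfl⟩⟩

theorem map₂ (op : Prop → Prop → Prop) (hF : Recognizable F) (hF' : Recognizable F') :
    Recognizable fun M X e => op (F M X e) (F' M X e) := by
  obtain ⟨T, outT, hT⟩ := hF
  obtain ⟨U, outU, hU⟩ := hF'
  refine ⟨T.prod U, fun s => op (outT s.1) (outU s.2), fun M hM X => ?_⟩
  obtain ⟨q, hq, hqout⟩ := hT M hM X
  obtain ⟨r, hr, hrout⟩ := hU M hM X
  exact ⟨_, hq.prod hr, fun e he => by simp only [hqout e he, hrout e he]⟩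

theorem not (hF : Recognizable F) : Recognizable fun M X e => ¬ F M X e := by
  obtain ⟨T, out, hT⟩ := hF
  refine ⟨T, fun s => ¬ out s, fun M hM X => ?_⟩
  obtain ⟨q, hq, hout⟩ := hT M hM X
  exact ⟨q, hq, fun e he => not_congr (hout e he)⟩

theorem comp (hF : Recognizable F) (hF' : Recognizable F') :
    Recognizable fun M X e => F M (F' M X) e := by
  obtain ⟨T, outT, hT⟩ := hF
  obtain ⟨U, outU, hU⟩ := hF'
  refine ⟨T.cascade U outU, fun s => outT s.1, fun M hM X => ?_⟩
  obtain ⟨r, hr, hrout⟩ := hU M hM X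
  obtain ⟨q, hq, hqout⟩ := hT M hM (F' M X)
  exact ⟨_, hq.cascade hr hrout, hqout⟩

theorem exists_edge (c : Option A.DS) :
    Recognizable fun (M : PreCBM A Alph) X e => ∃ f, M.edge c e f ∧ X f := by
  refine ⟨{ State := Prop × Prop, δ := fun _ _ x S => (x, ∃ s ∈ S c, s.1) }, Prod.snd,
    fun M _ X => ⟨fun e => (X e, ∃ f, M.edge c e f ∧ X f), fun e _ => ?_, fun _ _ => .rfl⟩⟩
  simp only [PreCBM.targets, Set.exists_mem_image, Set.mem_ofPred_eq]

theorem exists_reflTransGen {R : PreCBM A Alph → A.Event → A.Event → Prop}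
    (hR : Recognizable fun M X e => ∃ f, R M e f ∧ X f) :
    Recognizable fun M X e => ∃ f, Relation.ReflTransGen (R M) e f ∧ X f := by
  obtain ⟨T, out, hT⟩ := hR
  refine ⟨T.star out, Prod.fst, fun M hM X => ?_⟩
  let Y : A.Event → Prop := fun e => ∃ f, Relation.ReflTransGen (R M) e f ∧ X f
  obtain ⟨q, hq, -⟩ := hT M hM Y
  refine ⟨_, hq.star fun e he => ?_, fun _ _ => .rfl⟩
  obtain ⟨q', hq', hout⟩ := hT M hM fun f => f ≠ e ∧ Y f
  rw [← hq.eq_δ_of_input_ne hM hq' he, hout e he]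
  exact exists_reflTransGen_and_iff (R M) X e

end Recognizable

section Pdl

variable {A : Architecture} {Alph : Type}

mutual

theorem PdlS.recognizable : ∀ σ : PdlS A Alph, σ.NoInter → σ.NoConvLoop →
    Recognizable fun (M : PreCBM A Alph) _ e => pdlSSem M σ e
  | .proc p, _, _ => (Recognizable.of_local fun p' _ _ => p' = p).congr fun M _ e he => by
      simp only [pdlSSem, he, true_and]
  | .letter a, _, _ => (Recognizable.of_local fun _ a' _ => a' = some a).congr fun M _ e he => by
      simp only [pdlSSem, he, true_and]
  | .or σ₁ σ₂, h₁, h₂ =>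
      ((σ₁.recognizable h₁.1 h₂.1).map₂ Or (σ₂.recognizable h₁.2 h₂.2)).congr fun M _ e _ => by
        simp only [pdlSSem]
  | .not σ, h₁, h₂ => (σ.recognizable h₁ h₂).not.congr fun M _ e he => by
      simp only [pdlSSem, he, true_and]
  | .diam π σ, h₁, h₂ =>
      ((π.recognizable h₁.1 h₂.1).comp (σ.recognizable h₁.2 h₂.2)).congr fun M _ e _ => by
        simp only [pdlSSem]
  | .loop _, _, h₂ => h₂.elim

theorem PdlP.recognizable : ∀ π : PdlP A Alph, π.NoInter → π.NoConvLoop →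
    Recognizable fun (M : PreCBM A Alph) X e => ∃ f, pdlPSem M π e f ∧ X f
  | .succ, _, _ => (Recognizable.exists_edge none).congr fun M _ e _ => by
      simp only [pdlPSem, PreCBM.edge]
  | .mat d, _, _ => (Recognizable.exists_edge (some d)).congr fun M _ e _ => by
      simp only [pdlPSem, PreCBM.edge]
  | .test σ, h₁, h₂ =>
      ((σ.recognizable h₁ h₂).map₂ And (Recognizable.of_local fun _ _ x => x)).congr
        fun M _ e _ => by simp only [pdlPSem, and_assoc, exists_eq_left']
  | .plus π₁ π₂, h₁, h₂ =>
      ((π₁.recognizable h₁.1 h₂.1).map₂ Or (π₂.recognizable h₁.2 h₂.2)).congr fun M _ e _ => by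
        simp only [pdlPSem, or_and_right, exists_or]
  | .comp π₁ π₂, h₁, h₂ =>
      ((π₁.recognizable h₁.1 h₂.1).comp (π₂.recognizable h₁.2 h₂.2)).congr fun M _ e _ => by
        simp only [pdlPSem]
        exact ⟨fun ⟨g, hg, f, hf, hX⟩ => ⟨f, ⟨g, hg, hf⟩, hX⟩,
          fun ⟨f, ⟨g, hg, hf⟩, hX⟩ => ⟨g, hg, f, hf, hX⟩⟩
  | .star π, h₁, h₂ => (π.recognizable h₁ h₂).exists_reflTransGen.congr fun M _ e he => by
      simp only [pdlPSem, he, true_and, Relation.reflTransGen_iff_eq_or_transGen, eq_comm (a := e)]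
  | .conv _, _, h₂ => h₂.elim
  | .inter _ _, h₁, _ => h₁.elim

end

theorem PdlSentence.recognizable : ∀ Φ : PdlSentence A Alph, Φ.NoInter → Φ.NoConvLoop →
    ∃ (T : LookaheadAutomaton A Alph) (G : Set T.State → Prop), ∀ M : PreCBM A Alph, M.IsCBM →
      ∃ q, T.Labels M (fun _ => False) q ∧ (G (q '' M.events) ↔ pdlSentSem M Φ)
  | .ex σ, h₁, h₂ => by
      obtain ⟨T, out, hT⟩ := σ.recognizable h₁ h₂
      refine ⟨T, fun V => ∃ s ∈ V, out s, fun M hM => ?_⟩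
      obtain ⟨q, hq, hout⟩ := hT M hM fun _ => False
      refine ⟨q, hq, ?_⟩
      simp only [Set.exists_mem_image, pdlSentSem]
      exact exists_congr fun e => and_congr_right (hout e)
  | .or Φ₁ Φ₂, h₁, h₂ => by
      obtain ⟨T, G, hT⟩ := Φ₁.recognizable h₁.1 h₂.1
      obtain ⟨U, H, hU⟩ := Φ₂.recognizable h₁.2 h₂.2
      refine ⟨T.prod U, fun V => G (Prod.fst '' V) ∨ H (Prod.snd '' V), fun M hM => ?_⟩
      obtain ⟨q, hq, hG⟩ := hT M hM
      obtain ⟨r, hr, hH⟩ := hU M hM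
      refine ⟨_, hq.prod hr, ?_⟩
      simp only [Set.image_image]
      exact or_congr hG hH
  | .not Φ, h₁, h₂ => by
      obtain ⟨T, G, hT⟩ := Φ.recognizable h₁ h₂
      refine ⟨T, fun V => ¬ G V, fun M hM => ?_⟩
      obtain ⟨q, hq, hG⟩ := hT M hM
      exact ⟨q, hq, not_congr hG⟩

end Pdl

/-! ### Simulation by a CPDS -/

theorem image_Icc_one_succ {β : Type*} (g : ℕ → β) (i : ℕ) :
    g '' Set.Icc 1 (i + 1) = insert (g (i + 1)) (g '' Set.Icc 1 i) := by
  rw [← Set.insert_Icc_right_eq_Icc_add_one (by omega), Set.image_insert_eq]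

namespace LookaheadAutomaton

variable {A : Architecture} {Alph : Type} {M : PreCBM A Alph}

/-- The location reached at an event in the simulation of an automaton with states `Q` by a CPDS:
the state of the event, a guess of the set of states of its process successors (a singleton, or
empty at the last event), and the states seen so far on its process. -/
structure Loc (Q : Type) where
  state : Q
  next : Set Q
  seen : Set Q

instance {Q : Type} [Finite Q] : Finite (Loc Q) :=
  Finite.of_injective (fun l => (l.state, l.next, l.seen)) <| by
    rintro ⟨_, _, _⟩ ⟨_, _, _⟩ h
    simpa using h

/-- The states seen on a process up to a location, where `none` is the initial location. -/
def seenBy {Q : Type} (l : Option (Loc Q)) : Set Q := l.elim ∅ Loc.seen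

/-- The transition to the location `k` at an event of `p` whose `▷^d`-target has its state
in `m d`. -/
structure Step (T : LookaheadAutomaton A Alph) (p : A.Procs) (l : Option (Loc T.State))
    (a : Alph) (m : A.DS → Set T.State) (k : Loc T.State) : Prop where
  state_eq : k.state = T.δ p (some a) False fun c => c.elim k.next m
  next_eq : ∀ j ∈ l, j.next = {k.state}
  seen_eq : k.seen = insert k.state (seenBy l)

/-- The CPDS guessing a run of `T` with constant input `False` and accepting if the set of all
states of that run satisfies `G`. A writer guesses the state of its reader and sends the guess, as
a singleton, through the data structure. -/
noncomputable abbrev toCPDS (T : LookaheadAutomaton A Alph) (G : Set T.State → Prop) :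
    CPDS A Alph where
  Locs := Option (Loc T.State)
  Val := Set T.State
  locsFintype := Fintype.ofFinite _
  valFintype := Fintype.ofFinite _
  locsNonempty := ⟨none⟩
  valNonempty := ⟨∅⟩
  internal p l a l' := ∃ k ∈ l', T.Step p l a (fun _ => ∅) k
  write p l a d v l' :=
    A.Writer d = p ∧ ∃ k ∈ l', T.Step p l a (Function.update (fun _ => ∅) d v) k
  read p l a d v l' :=
    A.Reader d = p ∧ ∃ k ∈ l', T.Step p l a (fun _ => ∅) k ∧ v = {k.state}
  write_writer _ _ _ _ _ _ h := h.1
  read_reader _ _ _ _ _ _ h := h.1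
  init := none
  finals := {t | (∀ p, ∀ k ∈ t p, k.next = ∅) ∧ G (⋃ p, seenBy (t p))}

variable {T : LookaheadAutomaton A Alph} {G : Set T.State → Prop}
  {ρ : A.Event → Option (Loc T.State)} {κ : A.Event → Loc T.State}

/-- The location of process `p` after its first `i` events, when event `e` leads to `κ e`. -/
def locAfter {Q : Type} (κ : A.Event → Loc Q) (p : A.Procs) : ℕ → Option (Loc Q)
  | 0 => none
  | i + 1 => some (κ (p, i + 1))

/-- The locations `κ` respect the transitions of `T.toCPDS G`, with the states of matching targets
read off directly instead of being communicated. -/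
def IsLocRun (T : LookaheadAutomaton A Alph) (M : PreCBM A Alph) (κ : A.Event → Loc T.State) :
    Prop :=
  ∀ e, M.isEvent e → ∃ a, M.label e = some a ∧ T.Step e.1 (locAfter κ e.1 (e.2 - 1)) a
    (fun d => M.targets (fun f => (κ f).state) e (some d)) (κ e)

theorem prevLoc_toCPDS (hκ : ∀ e, M.isEvent e → ρ e = some (κ e)) {e : A.Event}
    (he : M.isEvent e) : (T.toCPDS G).prevLoc ρ e = locAfter κ e.1 (e.2 - 1) := by
  obtain ⟨p, _ | _ | i⟩ := e
  · exact absurd he.1 (by simp)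
  · rfl
  · exact hκ (p, i + 1) ⟨by simp, (Nat.le_succ _).trans he.2⟩

theorem lastLoc_toCPDS (hκ : ∀ e, M.isEvent e → ρ e = some (κ e)) (p : A.Procs) :
    (T.toCPDS G).lastLoc M ρ p = locAfter κ p (M.word p).length := by
  rw [CPDS.lastLoc]
  have hlast : 1 ≤ (M.word p).length → ρ (p, (M.word p).length) = _ :=
    fun hpos => hκ (p, (M.word p).length) ⟨hpos, le_rfl⟩
  cases h : (M.word p).length with
  | zero => rfl
  | succ i =>
    rw [h] at hlast
    exact hlast (by omega)

theorem exists_forall_eq_some_of_isRun (hρ : (T.toCPDS G).IsRun M ρ) :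
    ∃ κ : A.Event → Loc T.State, ∀ e, M.isEvent e → ρ e = some (κ e) := by
  suffices ∀ e, ∃ k, M.isEvent e → ρ e = some k from Classical.skolem.1 this
  intro e
  by_cases he : M.isEvent e
  · by_cases hint : M.isInternal e
    · obtain ⟨a, -, k, hk, -⟩ := hρ.1 e he hint
      exact ⟨k, fun _ => hk⟩
    · obtain ⟨d, f, h | h⟩ := not_not.1 hint
      · obtain ⟨v, a, b, -, -, ⟨-, k, hk, -⟩, -⟩ := hρ.2 d e f h
        exact ⟨k, fun _ => hk⟩
      · obtain ⟨v, a, b, -, -, -, -, k, hk, -⟩ := hρ.2 d f e h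
        exact ⟨k, fun _ => hk⟩
  · exact ⟨⟨T.δ e.1 none False fun _ => ∅, ∅, ∅⟩, fun h => absurd h he⟩

theorem isLocRun_of_isRun (hM : M.IsCBM) (hκ : ∀ e, M.isEvent e → ρ e = some (κ e))
    (hρ : (T.toCPDS G).IsRun M ρ) : T.IsLocRun M κ := by
  intro e he
  have eq_of_mem : ∀ {f k}, M.isEvent f → k ∈ ρ f → k = κ f := fun {f k} hf hk =>
    Option.some.inj (hk.symm.trans (hκ f hf))
  rw [← prevLoc_toCPDS (G := G) hκ he]
  by_cases hint : M.isInternal e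
  · obtain ⟨a, ha, k, hk, hstep⟩ := hρ.1 e he hint
    obtain rfl := eq_of_mem he hk
    exact ⟨a, ha, by rwa [PreCBM.targets_some_of_isInternal _ hint]⟩
  obtain ⟨d, f, h | h⟩ := not_not.1 hint
  · obtain ⟨v, a, b, ha, -, ⟨-, k, hk, hstep⟩, -, j, hj, -, rfl⟩ := hρ.2 d e f h
    obtain rfl := eq_of_mem he hk
    obtain rfl := eq_of_mem (hM.mrel_valid d e f h).2.1 hj
    exact ⟨a, ha, by rwa [hM.targets_some_of_mrel_left _ h]⟩
  · obtain ⟨v, b, a, -, ha, -, -, k, hk, hstep, -⟩ := hρ.2 d f e h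
    obtain rfl := eq_of_mem he hk
    exact ⟨a, ha, by rwa [hM.targets_some_of_mrel_right _ h]⟩

theorem IsLocRun.isRun (hM : M.IsCBM) (hκ : T.IsLocRun M κ) :
    (T.toCPDS G).IsRun M fun e => some (κ e) := by
  have hprev {e : A.Event} (he : M.isEvent e) :
      (T.toCPDS G).prevLoc (fun e => some (κ e)) e = locAfter κ e.1 (e.2 - 1) :=
    prevLoc_toCPDS (fun _ _ => rfl) he
  constructor
  · intro e he hint
    obtain ⟨a, ha, hstep⟩ := hκ e he
    rw [PreCBM.targets_some_of_isInternal _ hint, ← hprev he] at hstep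
    exact ⟨a, ha, κ e, rfl, hstep⟩
  · intro d e f h
    obtain ⟨he, hf, hwriter, hreader⟩ := hM.mrel_valid d e f h
    obtain ⟨a, ha, hwrite⟩ := hκ e he
    obtain ⟨b, hb, hread⟩ := hκ f hf
    rw [hM.targets_some_of_mrel_left _ h, ← hprev he] at hwrite
    rw [hM.targets_some_of_mrel_right _ h, ← hprev hf] at hread
    exact ⟨{(κ f).state}, a, b, ha, hb, ⟨hwriter.symm, κ e, rfl, hwrite⟩,
      hreader.symm, κ f, rfl, hread, rfl⟩

theorem acceptsPre_toCPDS_iff_exists_isLocRun (hM : M.IsCBM) :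
    (T.toCPDS G).AcceptsPre M ↔ ∃ κ, T.IsLocRun M κ ∧
      (∀ p, ∀ k ∈ locAfter κ p (M.word p).length, k.next = ∅) ∧
      G (⋃ p, seenBy (locAfter κ p (M.word p).length)) := by
  constructor
  · rintro ⟨ρ, hρ, hnext, hG⟩
    obtain ⟨κ, hκ⟩ := exists_forall_eq_some_of_isRun hρ
    simp only [lastLoc_toCPDS hκ] at hnext hG
    exact ⟨κ, isLocRun_of_isRun hM hκ hρ, hnext, hG⟩
  · rintro ⟨κ, hκ, hfinal⟩
    refine ⟨fun e => some (κ e), hκ.isRun hM, ?_⟩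
    have hlast : (T.toCPDS G).lastLoc M (fun e => some (κ e)) =
        fun p => locAfter κ p (M.word p).length := funext (lastLoc_toCPDS fun _ _ => rfl)
    rw [hlast]
    exact hfinal

theorem IsLocRun.seenBy_locAfter (hκ : T.IsLocRun M κ) (p : A.Procs) {i : ℕ}
    (hi : i ≤ (M.word p).length) :
    seenBy (locAfter κ p i) = (fun j => (κ (p, j)).state) '' Set.Icc 1 i := by
  induction i with
  | zero => simp [locAfter, seenBy]
  | succ i ih =>
    obtain ⟨a, -, hstep⟩ := hκ (p, i + 1) ⟨by simp, hi⟩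
    rw [image_Icc_one_succ, ← ih (by omega)]
    exact hstep.seen_eq

theorem IsLocRun.next_eq_targets (hκ : T.IsLocRun M κ)
    (hlast : ∀ p, ∀ k ∈ locAfter κ p (M.word p).length, k.next = ∅) {e : A.Event}
    (he : M.isEvent e) : (κ e).next = M.targets (fun f => (κ f).state) e none := by
  obtain ⟨p, i⟩ := e
  obtain ⟨hpos, hle⟩ := he
  have hloc : locAfter κ p i = some (κ (p, i)) := by
    obtain ⟨j, rfl⟩ := Nat.exists_eq_add_of_le' hpos
    rfl
  by_cases hsucc : M.isEvent (p, i + 1)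
  · obtain ⟨a, -, hstep⟩ := hκ _ hsucc
    rw [PreCBM.targets_none_of_isEvent_succ _ ⟨hpos, hle⟩ hsucc]
    exact hstep.next_eq _ hloc
  · have hi : i = (M.word p).length :=
      hle.antisymm (not_lt.1 fun hlt => hsucc ⟨by simp, hlt⟩)
    rw [PreCBM.targets_none_of_not_isEvent_succ _ hsucc]
    exact hlast p _ (hi ▸ hloc)

theorem IsLocRun.labels (hκ : T.IsLocRun M κ)
    (hlast : ∀ p, ∀ k ∈ locAfter κ p (M.word p).length, k.next = ∅) :
    T.Labels M (fun _ => False) fun e => (κ e).state := by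
  intro e he
  obtain ⟨a, ha, hstep⟩ := hκ e he
  have := hstep.state_eq
  rwa [hκ.next_eq_targets hlast he, PreCBM.elim_targets, ← ha] at this

/-- The location reached at `e` in the simulation of the run `q`. -/
def locOf {Q : Type} (M : PreCBM A Alph) (q : A.Event → Q) (e : A.Event) : Loc Q where
  state := q e
  next := M.targets q e none
  seen := (fun j => q (e.1, j)) '' Set.Icc 1 e.2

theorem Labels.isLocRun {q : A.Event → T.State} (hq : T.Labels M (fun _ => False) q) :
    T.IsLocRun M (locOf M q) := by
  rintro ⟨p, _ | i⟩ he
  · exact absurd he.1 (by simp)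
  obtain ⟨a, ha⟩ := PreCBM.exists_label_eq_some he
  refine ⟨a, ha, ?_, ?_, ?_⟩
  · simp only [locOf, PreCBM.elim_targets, ← ha]
    exact hq _ he
  · cases i with
    | zero => rintro _ ⟨⟩
    | succ i =>
      rintro _ ⟨⟩
      exact PreCBM.targets_none_of_isEvent_succ q ⟨by simp, (Nat.le_succ _).trans he.2⟩ he
  · refine (image_Icc_one_succ _ i).trans ?_
    cases i <;> simp [locOf, locAfter, seenBy]

theorem next_eq_empty_of_mem_locAfter_locOf {Q : Type} (q : A.Event → Q) (p : A.Procs)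
    {k : Loc Q} (hk : k ∈ locAfter (locOf M q) p (M.word p).length) : k.next = ∅ := by
  have hsucc : ¬ M.isEvent (p, (M.word p).length + 1) := fun h => by simpa using h.2
  cases h : (M.word p).length with
  | zero =>
    rw [h] at hk
    cases hk
  | succ i =>
    rw [h] at hk hsucc
    cases hk
    exact PreCBM.targets_none_of_not_isEvent_succ q hsucc

theorem acceptsPre_toCPDS_iff (hM : M.IsCBM) {q : A.Event → T.State}
    (hq : T.Labels M (fun _ => False) q) :
    (T.toCPDS G).AcceptsPre M ↔ G (q '' M.events) := by
  have iUnion_seenBy {κ} (hκ : T.IsLocRun M κ) :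
      ⋃ p, seenBy (locAfter κ p (M.word p).length) = (fun e => (κ e).state) '' M.events := by
    simp only [hκ.seenBy_locAfter _ le_rfl]
    exact PreCBM.iUnion_image_Icc_eq_image_events fun e => (κ e).state
  rw [acceptsPre_toCPDS_iff_exists_isLocRun hM]
  constructor
  · rintro ⟨κ, hκ, hlast, hG⟩
    have heq : (fun e => (κ e).state) '' M.events = q '' M.events :=
      Set.image_congr fun e he => (hκ.labels hlast).eq_of_input_eq hM hq he fun _ _ => rfl
    rwa [iUnion_seenBy hκ, heq] at hG
  · intro hG
    refine ⟨locOf M q, hq.isLocRun, fun p k => next_eq_empty_of_mem_locAfter_locOf q p, ?_⟩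
    rwa [iUnion_seenBy hq.isLocRun]

end LookaheadAutomaton

theorem pdl_to_cpds_general (A : Architecture) (Alph : Type) (Φ : PdlSentence A Alph)
    (h₁ : Φ.NoInter) (h₂ : Φ.NoConvLoop) :
    ∃ S : CPDS A Alph, S.lang = pdlLang A Alph Φ := by
  obtain ⟨T, G, hT⟩ := Φ.recognizable h₁ h₂
  refine ⟨T.toCPDS G, Set.ext fun M => ?_⟩
  obtain ⟨q, hq, hG⟩ := hT M.1 M.2
  exact (LookaheadAutomaton.acceptsPre_toCPDS_iff M.2 hq).trans hG

/-- For every architecture `A`, finite alphabet `Alph`, and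
every PDL sentence `Φ` (no converse, no intersection, no loop), there exists a
CPDS `S` over `(A, Alph)` such that `L(S) = L_cbm(Φ)`. -/
theorem pdl_to_cpds (A : Architecture) (Alph : Type) [Fintype Alph]
    (Φ : PdlSentence A Alph) (h₁ : Φ.NoInter) (h₂ : Φ.NoConvLoop) :
    ∃ S : CPDS A Alph, S.lang = pdlLang A Alph Φ :=
  pdl_to_cpds_general A Alph Φ h₁ h₂
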